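/- arXiv:1210.5097 — 4 statements merged into one kernel-verified Lean document; each statement's English description precedes it below -/
import Mathlib

section
/- Let 𝔨 be a real Lie algebra, K₀ ⊆ 𝔨 a Lie subalgebra, and V ⊆ 𝔨 a linear subspace such that ⁅Z, Y⁆ ∈ V + K₀ for every Z ∈ K₀ and every Y ∈ V. Define subspaces K_j (j ≥ 0) by K_0 := K₀ and, for j ≥ 1, K_j := {Z ∈ K₀ : ⁅Z, Y⁆ ∈ K_{j−1} for all Y ∈ V}. Then for every j ≥ 0 one has ⁅K₀, K_j⁆ ⊆ K_j, i.e. for all Z ∈ K₀ and Z′ ∈ K_j, the bracket ⁅Z, Z′⁆ lies in K_j. -/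
/-- The Killing filtration: `K 0 = K₀` and
`K (j+1) = {Z ∈ K₀ : ⁅Z, Y⁆ ∈ K j for all Y ∈ V}`. -/
def killingFiltration (𝔨 : Type*) [LieRing 𝔨] [LieAlgebra ℝ 𝔨]
    (K₀ : LieSubalgebra ℝ 𝔨) (V : Submodule ℝ 𝔨) : ℕ → Submodule ℝ 𝔨
  | 0 => K₀.toSubmodule
  | (j + 1) =>
    { carrier := {Z | Z ∈ K₀ ∧ ∀ Y ∈ V, ⁅Z, Y⁆ ∈ killingFiltration 𝔨 K₀ V j}
      add_mem' := by
        rintro a b ⟨ha, ha'⟩ ⟨hb, hb'⟩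
        refine ⟨K₀.add_mem ha hb, fun Y hY => ?_⟩
        rw [add_lie]
        exact (killingFiltration 𝔨 K₀ V j).add_mem (ha' Y hY) (hb' Y hY)
      zero_mem' := by
        refine ⟨K₀.zero_mem, fun Y hY => ?_⟩
        rw [zero_lie]
        exact (killingFiltration 𝔨 K₀ V j).zero_mem
      smul_mem' := by
        rintro c a ⟨ha, ha'⟩
        refine ⟨K₀.smul_mem c ha, fun Y hY => ?_⟩
        rw [smul_lie]
        exact (killingFiltration 𝔨 K₀ V j).smul_mem c (ha' Y hY) }

theorem killingFiltration_succ_le {𝔨 : Type*} [LieRing 𝔨] [LieAlgebra ℝ 𝔨]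
    (K₀ : LieSubalgebra ℝ 𝔨) (V : Submodule ℝ 𝔨) (j : ℕ) :
    ∀ Z ∈ killingFiltration 𝔨 K₀ V (j + 1), Z ∈ killingFiltration 𝔨 K₀ V j := by
  induction j with
  | zero =>
    rintro Z ⟨h, -⟩
    exact h
  | succ j ih =>
    rintro Z ⟨h, h'⟩
    exact ⟨h, fun Y hY => ih _ (h' Y hY)⟩

/-- `⁅K₀, K_j⁆ ⊆ K_j` for all `j ≥ 0`. -/
theorem bracket_K0_Kj_mem {𝔨 : Type*} [LieRing 𝔨] [LieAlgebra ℝ 𝔨]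
    (K₀ : LieSubalgebra ℝ 𝔨) (V : Submodule ℝ 𝔨)
    (hbr : ∀ Z ∈ K₀, ∀ Y ∈ V, ⁅Z, Y⁆ ∈ V ⊔ K₀.toSubmodule)
    (j : ℕ) (Z Z' : 𝔨) (hZ : Z ∈ K₀) (hZ' : Z' ∈ killingFiltration 𝔨 K₀ V j) :
    ⁅Z, Z'⁆ ∈ killingFiltration 𝔨 K₀ V j := by
  induction j generalizing Z Z' with
  | zero => exact K₀.lie_mem hZ hZ'
  | succ j ih =>
    have hle := killingFiltration_succ_le K₀ V j Z' hZ'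
    obtain ⟨h0, h1⟩ := hZ'
    refine ⟨K₀.lie_mem hZ h0, fun Y hY => ?_⟩
    rw [lie_lie]
    refine Submodule.sub_mem _ (ih _ _ hZ (h1 Y hY)) ?_
    obtain ⟨v, hv, k, hk, hvk⟩ := Submodule.mem_sup.1 (hbr Z hZ Y hY)
    rw [← hvk, lie_add]
    refine Submodule.add_mem _ (h1 v hv) ?_
    rw [← lie_skew]
    exact Submodule.neg_mem _ (ih _ _ hk hle)
end

section
/- Let 𝔨 be a finite-dimensional real Lie algebra, K₀ ⊆ 𝔨 a Lie subalgebra, and V ⊆ 𝔨 a linear subspace such that ⁅Z, Y⁆ ∈ V + K₀ for every Z ∈ K₀ and every Y ∈ V, and define K_j as in the Killing filtration; assume moreover that ⋂_{j≥0} K_j = {0}. Let F : 𝔨 → 𝔨 be a Lie algebra automorphism such that F(K₀) ⊆ K₀, F(Y) − Y ∈ K₀ for every Y ∈ V, and such that for every W ∈ 𝔨 the orbit {Fⁿ(W) : n ∈ ℕ} is bounded (with respect to some, equivalently any, norm on 𝔨). Then F(Y) = Y for every Y ∈ V. -/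
theorem kf_succ_iff {𝔨 : Type*} [LieRing 𝔨] [LieAlgebra ℝ 𝔨]
    (K₀ : LieSubalgebra ℝ 𝔨) (V : Submodule ℝ 𝔨) (j : ℕ) (Z : 𝔨) :
    Z ∈ killingFiltration 𝔨 K₀ V (j + 1) ↔
      Z ∈ K₀ ∧ ∀ Y ∈ V, ⁅Z, Y⁆ ∈ killingFiltration 𝔨 K₀ V j := Iff.rfl

theorem kf_zero_iff {𝔨 : Type*} [LieRing 𝔨] [LieAlgebra ℝ 𝔨]
    (K₀ : LieSubalgebra ℝ 𝔨) (V : Submodule ℝ 𝔨) (Z : 𝔨) :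
    Z ∈ killingFiltration 𝔨 K₀ V 0 ↔ Z ∈ K₀ := Iff.rfl

theorem kf_succ_le {𝔨 : Type*} [LieRing 𝔨] [LieAlgebra ℝ 𝔨]
    (K₀ : LieSubalgebra ℝ 𝔨) (V : Submodule ℝ 𝔨) (j : ℕ) :
    killingFiltration 𝔨 K₀ V (j + 1) ≤ killingFiltration 𝔨 K₀ V j := by
  induction j with
  | zero => exact fun Z hZ => hZ.1
  | succ j ih => exact fun Z hZ => ⟨hZ.1, fun Y hY => ih (hZ.2 Y hY)⟩

theorem kf_lie {𝔨 : Type*} [LieRing 𝔨] [LieAlgebra ℝ 𝔨]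
    (K₀ : LieSubalgebra ℝ 𝔨) (V : Submodule ℝ 𝔨)
    (hbr : ∀ Z ∈ K₀, ∀ Y ∈ V, ⁅Z, Y⁆ ∈ V ⊔ K₀.toSubmodule) (j : ℕ) :
    ∀ Z ∈ killingFiltration 𝔨 K₀ V j, ∀ W ∈ K₀,
      ⁅Z, W⁆ ∈ killingFiltration 𝔨 K₀ V j := by
  induction j with
  | zero => exact fun Z hZ W hW => K₀.lie_mem hZ hW
  | succ j ih =>
    intro Z hZ W hW
    refine ⟨K₀.lie_mem hZ.1 hW, fun Y hY => ?_⟩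
    rw [lie_lie]
    refine Submodule.sub_mem _ ?_ ?_
    · obtain ⟨A, hA, B, hB, hAB⟩ := Submodule.mem_sup.1 (hbr W hW Y hY)
      rw [← hAB, lie_add]
      exact Submodule.add_mem _ (hZ.2 A hA) (ih Z (kf_succ_le K₀ V j hZ) B hB)
    · rw [← lie_skew]
      exact Submodule.neg_mem _ (ih _ (hZ.2 Y hY) W hW)

theorem kf_sub {𝔨 : Type*} [LieRing 𝔨] [LieAlgebra ℝ 𝔨]
    (K₀ : LieSubalgebra ℝ 𝔨) (V : Submodule ℝ 𝔨)
    (hbr : ∀ Z ∈ K₀, ∀ Y ∈ V, ⁅Z, Y⁆ ∈ V ⊔ K₀.toSubmodule)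
    (F : 𝔨 ≃ₗ⁅ℝ⁆ 𝔨)
    (hF0 : ∀ Z ∈ K₀, F Z ∈ K₀)
    (hFV : ∀ Y ∈ V, F Y - Y ∈ K₀) (j : ℕ) :
    ∀ Z ∈ killingFiltration 𝔨 K₀ V j, F Z - Z ∈ killingFiltration 𝔨 K₀ V (j + 1) := by
  have key : ∀ Z Y : 𝔨, ⁅F Z - Z, Y⁆ = (F ⁅Z, Y⁆ - ⁅Z, Y⁆) - ⁅F Z, F Y - Y⁆ := by
    intro Z Y
    rw [LieEquiv.map_lie, sub_lie, lie_sub]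
    abel
  induction j with
  | zero =>
    intro Z hZ
    refine ⟨K₀.sub_mem (hF0 Z hZ) hZ, fun Y hY => ?_⟩
    rw [key]
    refine Submodule.sub_mem _ ?_ (K₀.lie_mem (hF0 Z hZ) (hFV Y hY))
    obtain ⟨A, hA, B, hB, hAB⟩ := Submodule.mem_sup.1 (hbr Z hZ Y hY)
    rw [← hAB, map_add, add_sub_add_comm]
    exact K₀.add_mem (hFV A hA) (K₀.sub_mem (hF0 B hB) hB)
  | succ j ih =>
    intro Z hZ
    refine ⟨K₀.sub_mem (hF0 Z hZ.1) hZ.1, fun Y hY => ?_⟩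
    rw [key]
    refine Submodule.sub_mem _ (ih _ (hZ.2 Y hY)) ?_
    refine kf_lie K₀ V hbr _ _ ?_ _ (hFV Y hY)
    have := Submodule.add_mem _ (ih Z (kf_succ_le K₀ V j hZ)) hZ
    rwa [sub_add_cancel] at this

/-- if `⋂ K_j = {0}`, `F` is a Lie algebra automorphism with
`F(K₀) ⊆ K₀`, `F(Y) − Y ∈ K₀` for `Y ∈ V`, and all orbits of `F` are bounded
with respect to some (equivalently, any) norm `N` on `𝔨`, then `F` is the
identity on `V`. -/
theorem fix_of_bounded_orbits {𝔨 : Type*} [LieRing 𝔨] [LieAlgebra ℝ 𝔨]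
    [FiniteDimensional ℝ 𝔨]
    (K₀ : LieSubalgebra ℝ 𝔨) (V : Submodule ℝ 𝔨)
    (hbr : ∀ Z ∈ K₀, ∀ Y ∈ V, ⁅Z, Y⁆ ∈ V ⊔ K₀.toSubmodule)
    (hcap : (⨅ j : ℕ, killingFiltration 𝔨 K₀ V j) = ⊥)
    (F : 𝔨 ≃ₗ⁅ℝ⁆ 𝔨)
    (hF0 : ∀ Z ∈ K₀, F Z ∈ K₀)
    (hFV : ∀ Y ∈ V, F Y - Y ∈ K₀)
    -- a norm on the vector space `𝔨`
    (N : 𝔨 → ℝ)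
    (hN0 : ∀ x : 𝔨, N x = 0 ↔ x = 0)
    (hNadd : ∀ x y : 𝔨, N (x + y) ≤ N x + N y)
    (hNsmul : ∀ (c : ℝ) (x : 𝔨), N (c • x) = |c| * N x)
    -- every orbit of `F` is bounded with respect to the norm `N`
    (hbdd : ∀ W : 𝔨, ∃ C : ℝ, ∀ n : ℕ, N ((⇑F)^[n] W) ≤ C) :
    ∀ Y ∈ V, F Y = Y := by
  classical
  -- a bounded orbit cannot grow linearly
  have step : ∀ X : 𝔨, F (F X - X) = F X - X → F X = X := by
    intro X hX
    have hiter : ∀ n : ℕ, (⇑F)^[n] X = X + (n : ℝ) • (F X - X) := by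
      intro n
      induction n with
      | zero => simp
      | succ n ih =>
        rw [Function.iterate_succ_apply', ih, map_add, map_smul, hX]
        push_cast
        rw [add_smul, one_smul]
        abel
    obtain ⟨C, hC⟩ := hbdd X
    have hneg : N (-X) = N X := by
      have := hNsmul (-1) X
      simpa using this
    have hlin : ∀ n : ℕ, (n : ℝ) * N (F X - X) ≤ C + N X := by
      intro n
      have h1 := hNadd ((⇑F)^[n] X) (-X)
      have h2 : (⇑F)^[n] X + -X = (n : ℝ) • (F X - X) := by
        rw [hiter n]; abel
      rw [h2, hNsmul, hneg, abs_of_nonneg (Nat.cast_nonneg n)] at h1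
      linarith [hC n]
    have hnn : 0 ≤ N (F X - X) := by
      have h1 := hNadd (F X - X) (-(F X - X))
      have h2 := hNsmul (-1) (F X - X)
      have h3 := (hN0 0).2 rfl
      rw [add_neg_cancel, h3] at h1
      simp only [neg_smul, one_smul, abs_neg, abs_one, one_mul] at h2
      linarith
    have hz : N (F X - X) = 0 := by
      by_contra hne
      have hpos : 0 < N (F X - X) := lt_of_le_of_ne hnn (Ne.symm hne)
      obtain ⟨n, hn⟩ := exists_nat_gt ((C + N X) / N (F X - X))
      rw [div_lt_iff₀ hpos] at hn
      linarith [hlin n]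
    exact sub_eq_zero.1 ((hN0 _).1 hz)
  -- the filtration reaches zero
  have hanti : Antitone (killingFiltration 𝔨 K₀ V) :=
    antitone_nat_of_succ_le (kf_succ_le K₀ V)
  obtain ⟨m, hm⟩ := IsArtinian.monotone_stabilizes
    (⟨fun n => OrderDual.toDual (killingFiltration 𝔨 K₀ V n), fun a b h => hanti h⟩ :
      ℕ →o (Submodule ℝ 𝔨)ᵒᵈ)
  have hbot : killingFiltration 𝔨 K₀ V m = ⊥ := by
    rw [eq_bot_iff, ← hcap]
    refine le_iInf fun j => ?_
    rcases le_total m j with h | h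
    · exact le_of_eq (hm j h)
    · exact hanti h
  -- descending induction: `F` is the identity on every `K_j`
  have hfix : ∀ d j : ℕ, m ≤ j + d → ∀ Z ∈ killingFiltration 𝔨 K₀ V j, F Z = Z := by
    intro d
    induction d with
    | zero =>
      intro j hj Z hZ
      have h0 : Z ∈ killingFiltration 𝔨 K₀ V m := hanti hj hZ
      rw [hbot, Submodule.mem_bot] at h0
      rw [h0, map_zero]
    | succ d ih =>
      intro j hj Z hZ
      exact step Z (ih (j + 1) (by omega) _ (kf_sub K₀ V hbr F hF0 hFV j Z hZ))
  intro Y hY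
  exact step Y (hfix m 0 (by omega) _ (hFV Y hY))
end

section
/- Let V be a real inner product space and let B : V × V → V be an ℝ-bilinear map such that B(x, y) = B(y, x) for all x, y ∈ V, and such that for every x ∈ V the linear map y ↦ B(x, y) is skew-adjoint, i.e. ⟪B(x, y), z⟫ = −⟪y, B(x, z)⟫ for all y, z ∈ V. Then B = 0. -/
open RealInnerProductSpace

/-- a symmetric bilinear map `B : V × V → V` on a real inner
product space all of whose partial maps `y ↦ B(x, y)` are skew-adjoint
vanishes (the first prolongation of `𝔬(V)` is trivial). -/
theorem symm_bilinear_skew_adjoint_eq_zero {V : Type*} [NormedAddCommGroup V]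
    [InnerProductSpace ℝ V]
    (B : V →ₗ[ℝ] V →ₗ[ℝ] V)
    (hsymm : ∀ x y : V, B x y = B y x)
    (hskew : ∀ x y z : V, ⟪B x y, z⟫ = -⟪y, B x z⟫) :
    B = 0 := by
  have hT : ∀ x y z : V, ⟪B x y, z⟫ = -⟪B x z, y⟫ := fun x y z => by
    rw [hskew x y z, real_inner_comm]
  ext x y
  refine ext_inner_right ℝ fun z => ?_
  have h1 := hT x y z
  have h2 := hT z x y
  have h3 := hT y z x
  rw [hsymm z x, hsymm z y] at h2
  rw [hsymm y x] at h3
  simp only [LinearMap.zero_apply, inner_zero_left]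
  linarith
end

section
/- Let V be a finite-dimensional real normed vector space. Then there exists an inner product ⟪·,·⟫ on V (a symmetric positive-definite bilinear form) such that every linear map f : V → V satisfying ‖f(v)‖ = ‖v‖ for all v ∈ V also satisfies ⟪f(x), f(y)⟫ = ⟪x, y⟫ for all x, y ∈ V. -/
open MeasureTheory in
theorem aux_isometry_measurePreserving {W : Type*} [NormedAddCommGroup W] [NormedSpace ℝ W]
    [FiniteDimensional ℝ W] [MeasurableSpace W] [BorelSpace W] (μ : Measure W)
    [μ.IsAddHaarMeasure] (g : W ≃ₗᵢ[ℝ] W) : MeasurePreserving g μ μ := by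
  refine ⟨g.continuous.measurable, ?_⟩
  have hd : LinearMap.det (g.toLinearEquiv : W →ₗ[ℝ] W) ≠ 0 :=
    (LinearEquiv.isUnit_det' g.toLinearEquiv).ne_zero
  have h1 := Measure.addHaar_preimage_linearMap μ hd (Metric.ball 0 1)
  have h2 : (g.toLinearEquiv : W →ₗ[ℝ] W) ⁻¹' (Metric.ball 0 1) = Metric.ball 0 1 := by
    ext x
    simp
  rw [h2] at h1
  have hpos : μ (Metric.ball (0 : W) 1) ≠ 0 := (Metric.measure_ball_pos μ 0 one_pos).ne'
  have hfin : μ (Metric.ball (0 : W) 1) ≠ ⊤ := measure_ball_lt_top.ne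
  have h3 := Measure.map_linearMap_addHaar_eq_smul_addHaar μ hd
  have h4 : ENNReal.ofReal |(LinearMap.det (g.toLinearEquiv : W →ₗ[ℝ] W))⁻¹| = 1 := by
    have : 1 * μ (Metric.ball (0 : W) 1) =
      ENNReal.ofReal |(LinearMap.det (g.toLinearEquiv : W →ₗ[ℝ] W))⁻¹| *
        μ (Metric.ball (0 : W) 1) := by rw [one_mul]; exact h1
    exact ((ENNReal.mul_left_inj hpos hfin).1 this).symm
  rw [h4, one_smul] at h3
  exact h3

open MeasureTheory in
/-- John's ellipsoid argument: on a finite-dimensional real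
normed space there is an inner product (a symmetric positive-definite
bilinear form) invariant under every linear isometry of the norm. -/
theorem exists_invariant_inner_product {V : Type*} [NormedAddCommGroup V]
    [NormedSpace ℝ V] [FiniteDimensional ℝ V] :
    ∃ b : V →ₗ[ℝ] V →ₗ[ℝ] ℝ,
      (∀ x y : V, b x y = b y x) ∧
      (∀ x : V, x ≠ 0 → 0 < b x x) ∧
      (∀ f : V →ₗ[ℝ] V, (∀ v : V, ‖f v‖ = ‖v‖) →
        ∀ x y : V, b (f x) (f y) = b x y) := by
  let μ : Measure (V →L[ℝ] ℝ) := Measure.addHaar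
  let B : Set (V →L[ℝ] ℝ) := Metric.ball 0 1
  have hcont : ∀ x y : V, Continuous fun φ : V →L[ℝ] ℝ => φ x * φ y := fun x y => by fun_prop
  have hint : ∀ x y : V, IntegrableOn (fun φ : V →L[ℝ] ℝ => φ x * φ y) B μ := fun x y =>
    ((hcont x y).continuousOn.integrableOn_compact
      (isCompact_closedBall (0 : V →L[ℝ] ℝ) 1)).mono_set Metric.ball_subset_closedBall
  refine ⟨LinearMap.mk₂ ℝ (fun x y => ∫ φ in B, φ x * φ y ∂μ) ?_ ?_ ?_ ?_, ?_, ?_, ?_⟩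
  · intro x x' y
    rw [← integral_add (hint _ _) (hint _ _)]
    simp only [map_add, add_mul]
  · intro c x y
    rw [smul_eq_mul, ← integral_const_mul]
    simp only [map_smul, smul_eq_mul, mul_assoc]
  · intro x y y'
    rw [← integral_add (hint _ _) (hint _ _)]
    simp only [map_add, mul_add]
  · intro c x y
    rw [smul_eq_mul, ← integral_const_mul]
    simp only [map_smul, smul_eq_mul, mul_left_comm]
  · intro x y
    simp only [LinearMap.mk₂_apply, mul_comm]
  · intro x hx
    simp only [LinearMap.mk₂_apply]
    rw [setIntegral_pos_iff_support_of_nonneg_ae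
      (Filter.Eventually.of_forall fun φ => mul_self_nonneg _) (hint x x)]
    refine IsOpen.measure_pos μ (((hcont x x).isOpen_support).inter Metric.isOpen_ball) ?_
    obtain ⟨φ, h1, h2⟩ := exists_dual_vector ℝ x (norm_ne_zero_iff.2 hx)
    refine ⟨(1 / 2 : ℝ) • φ, ?_, ?_⟩
    · simp [h2, hx]
    · simp only [B, mem_ball_zero_iff, norm_smul, h1]
      norm_num
  · intro f hf x y
    simp only [LinearMap.mk₂_apply]
    let F : V ≃ₗᵢ[ℝ] V := LinearIsometry.toLinearIsometryEquiv ⟨f, hf⟩ rfl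
    let T : (V →L[ℝ] ℝ) →ₗᵢ[ℝ] (V →L[ℝ] ℝ) :=
      { toFun := fun φ => φ.comp (F.toContinuousLinearEquiv : V →L[ℝ] V)
        map_add' := fun _ _ => rfl
        map_smul' := fun _ _ => rfl
        norm_map' := fun φ => ContinuousLinearMap.opNorm_comp_linearIsometryEquiv φ F }
    let g := T.toLinearIsometryEquiv rfl
    have hg := aux_isometry_measurePreserving μ g
    have hB : g ⁻¹' B = B := by
      ext φ
      simp [B]
    have := hg.setIntegral_preimage_emb g.toHomeomorph.measurableEmbedding
      (fun φ => φ x * φ y) B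
    rw [hB] at this
    exact this
end
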